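/- Let a ≥ 0, b > 0, R > 0, and let L ≥ 1 be an integer. Define the Type-I HARQ outage probability P(ρ) = (e^{-a} · Σ_{i=0}^∞ (a^i/i!) · γ(1+i, (2^R−1)/(ρb))/Γ(1+i))^L for ρ > 0. Then the diversity order equals L, i.e., lim_{ρ → ∞} (− log P(ρ) / log ρ) = L. -/

import Mathlib

open Filter

/-- The lower incomplete gamma function `γ(s, x) = ∫₀^x t^{s-1} e^{-t} dt`. -/
noncomputable def lincGamma (s x : ℝ) : ℝ :=
  ∫ t in (0:ℝ)..x, t ^ (s - 1) * Real.exp (-t)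

lemma lincGamma_nat (i : ℕ) (v : ℝ) :
    lincGamma (1 + i) v = ∫ t in (0:ℝ)..v, t ^ i * Real.exp (-t) := by
  unfold lincGamma
  congr 1
  ext t
  rw [add_sub_cancel_left, Real.rpow_natCast]

lemma lincGamma_nonneg' (i : ℕ) (v : ℝ) (hv : 0 ≤ v) : 0 ≤ lincGamma (1 + i) v := by
  rw [lincGamma_nat]
  apply intervalIntegral.integral_nonneg hv
  intro t ht
  have := ht.1
  positivity

lemma lincGamma_le' (i : ℕ) (v : ℝ) (hv : 0 ≤ v) (h1 : v ≤ 1) : lincGamma (1 + i) v ≤ v := by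
  rw [lincGamma_nat]
  have h : (∫ t in (0:ℝ)..v, t ^ i * Real.exp (-t)) ≤ ∫ t in (0:ℝ)..v, (1:ℝ) := by
    apply intervalIntegral.integral_mono_on hv
    · exact Continuous.intervalIntegrable (by fun_prop) _ _
    · exact Continuous.intervalIntegrable (by fun_prop) _ _
    · intro t ht
      have h2 : t ^ i ≤ 1 := pow_le_one₀ ht.1 (ht.2.trans h1)
      have h3 : Real.exp (-t) ≤ 1 := Real.exp_le_one_iff.2 (by linarith [ht.1])
      exact mul_le_one₀ h2 (Real.exp_pos _).le h3
  simpa using h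

lemma lincGamma_zero_ge (v : ℝ) (hv : 0 ≤ v) (h1 : v ≤ 1) :
    Real.exp (-1) * v ≤ lincGamma (1 + (0:ℕ)) v := by
  rw [lincGamma_nat]
  have h : (∫ t in (0:ℝ)..v, Real.exp (-1)) ≤ ∫ t in (0:ℝ)..v, t ^ 0 * Real.exp (-t) := by
    apply intervalIntegral.integral_mono_on hv
    · exact Continuous.intervalIntegrable (by fun_prop) _ _
    · exact Continuous.intervalIntegrable (by fun_prop) _ _
    · intro t ht
      rw [pow_zero, one_mul]
      exact Real.exp_le_exp.2 (by linarith [ht.2])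
  rw [intervalIntegral.integral_const, smul_eq_mul, sub_zero] at h
  linarith

lemma sum_bounds (a v : ℝ) (ha : 0 ≤ a) (hv : 0 ≤ v) (h1 : v ≤ 1) :
    Real.exp (-1) * v ≤ (∑' i : ℕ, a ^ i / (Nat.factorial i) *
        (lincGamma (1 + i) v / Real.Gamma (1 + i))) ∧
    (∑' i : ℕ, a ^ i / (Nat.factorial i) *
        (lincGamma (1 + i) v / Real.Gamma (1 + i))) ≤ Real.exp a * v := by
  have hG : ∀ i : ℕ, (1:ℝ) ≤ Real.Gamma (1 + i) := by
    intro i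
    rw [add_comm, Real.Gamma_nat_eq_factorial]
    exact_mod_cast Nat.succ_le_of_lt (Nat.factorial_pos i)
  have h0 : ∀ i : ℕ, 0 ≤ a ^ i / (Nat.factorial i) *
        (lincGamma (1 + i) v / Real.Gamma (1 + i)) := by
    intro i
    have h2 := lincGamma_nonneg' i v hv
    have h3 := hG i
    have h4 : 0 ≤ Real.Gamma (1 + i) := by linarith
    positivity
  have hle : ∀ i : ℕ, a ^ i / (Nat.factorial i) *
        (lincGamma (1 + i) v / Real.Gamma (1 + i)) ≤ a ^ i / (Nat.factorial i) * v := by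
    intro i
    apply mul_le_mul_of_nonneg_left _ (by positivity)
    exact (div_le_self (lincGamma_nonneg' i v hv) (hG i)).trans (lincGamma_le' i v hv h1)
  have hs : HasSum (fun i : ℕ => a ^ i / (Nat.factorial i) * v) (Real.exp a * v) := by
    apply HasSum.mul_right
    rw [Real.exp_eq_exp_ℝ]
    exact NormedSpace.expSeries_div_hasSum_exp a
  have hsum := Summable.of_nonneg_of_le h0 hle hs.summable
  constructor
  · refine le_trans ?_ (hsum.le_tsum 0 (fun i _ => h0 i))
    have := lincGamma_zero_ge v hv h1
    simpa using this
  · rw [← hs.tsum_eq]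
    exact hsum.tsum_le_tsum hle hs.summable

/-- The Type-I HARQ scheme achieves full diversity order `L`: with outage probability
`P(ρ) = (e^{-a} ∑_{i=0}^∞ (a^i/i!) γ(1+i, (2^R−1)/(ρb))/Γ(1+i))^L`,
one has `−log P(ρ)/log ρ → L` as `ρ → ∞`. -/
theorem typeI_diversity_order (a b R : ℝ) (ha : 0 ≤ a) (hb : 0 < b) (hR : 0 < R)
    (L : ℕ) (hL : 1 ≤ L)
    (P : ℝ → ℝ)
    (hP : ∀ ρ, 0 < ρ → P ρ = (Real.exp (-a) *
      ∑' i : ℕ, a ^ i / (Nat.factorial i) *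
        (lincGamma (1 + i) (((2 : ℝ) ^ R - 1) / (ρ * b)) / Real.Gamma (1 + i))) ^ L) :
    Tendsto (fun ρ : ℝ => -Real.log (P ρ) / Real.log ρ) atTop (nhds (L : ℝ)) := by
  have h2R : 0 < (2:ℝ) ^ R - 1 := by
    have := Real.one_lt_rpow (x := 2) (by norm_num) hR
    linarith
  obtain ⟨c, hc⟩ : ∃ c, c = ((2:ℝ) ^ R - 1) / b := ⟨_, rfl⟩
  have hc0 : 0 < c := by rw [hc]; positivity
  have hlim : ∀ k : ℝ, Tendsto (fun ρ : ℝ => (L:ℝ) * (1 - k / Real.log ρ)) atTop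
      (nhds (L:ℝ)) := by
    intro k
    have h : Tendsto (fun ρ : ℝ => k / Real.log ρ) atTop (nhds 0) :=
      tendsto_const_nhds.div_atTop Real.tendsto_log_atTop
    simpa using (h.const_sub 1).const_mul (L:ℝ)
  have key : ∀ ρ : ℝ, max 1 c < ρ →
      (L:ℝ) * (1 - Real.log c / Real.log ρ) ≤ -Real.log (P ρ) / Real.log ρ ∧
      -Real.log (P ρ) / Real.log ρ ≤ (L:ℝ) * (1 - (Real.log c - a - 1) / Real.log ρ) := by
    intro ρ hρ
    have hρ1 : 1 < ρ := (le_max_left _ _).trans_lt hρ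
    have hρc : c < ρ := (le_max_right _ _).trans_lt hρ
    have hρ0 : 0 < ρ := by linarith
    have hlog : 0 < Real.log ρ := Real.log_pos hρ1
    have hv : ((2 : ℝ) ^ R - 1) / (ρ * b) = c / ρ := by
      rw [hc]; field_simp
    have hPρ := hP ρ hρ0
    rw [hv] at hPρ
    have hv0 : 0 < c / ρ := by positivity
    obtain ⟨hl, hu⟩ := sum_bounds a (c / ρ) ha hv0.le ((div_le_one hρ0).2 hρc.le)
    generalize (∑' i : ℕ, a ^ i / (Nat.factorial i : ℝ) *
        (lincGamma (1 + i) (c / ρ) / Real.Gamma (1 + i))) = S at hPρ hl hu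
    have hS : 0 < S := lt_of_lt_of_le (by positivity) hl
    have hl' := Real.log_le_log (by positivity) hl
    have hu' := Real.log_le_log hS hu
    rw [Real.log_mul (Real.exp_pos _).ne' hv0.ne', Real.log_exp,
      Real.log_div hc0.ne' hρ0.ne'] at hl' hu'
    rw [hPρ, Real.log_pow, Real.log_mul (Real.exp_pos _).ne' hS.ne', Real.log_exp]
    have e : -((L:ℝ) * (-a + Real.log S)) / Real.log ρ
        = L * ((a - Real.log S) / Real.log ρ) := by ring
    have e2 : ∀ k : ℝ, 1 - k / Real.log ρ = (Real.log ρ - k) / Real.log ρ := by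
      intro k; field_simp
    rw [e, e2, e2]
    constructor
    · apply mul_le_mul_of_nonneg_left _ (Nat.cast_nonneg L)
      apply div_le_div_of_nonneg_right _ hlog.le
      linarith
    · apply mul_le_mul_of_nonneg_left _ (Nat.cast_nonneg L)
      apply div_le_div_of_nonneg_right _ hlog.le
      linarith
  apply tendsto_of_tendsto_of_tendsto_of_le_of_le' (hlim (Real.log c))
    (hlim (Real.log c - a - 1))
  · filter_upwards [eventually_gt_atTop (max 1 c)] with ρ hρ using (key ρ hρ).1
  · filter_upwards [eventually_gt_atTop (max 1 c)] with ρ hρ using (key ρ hρ).2
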